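/- arXiv:2304.01840 — 3 statements merged into one kernel-verified Lean document; each statement's English description precedes it below -/
import Mathlib

section
/- Fix ν ∈ ℝ and a subset S ⊆ N such that ν̂_j^S ≤ ν for all j ∉ S and ν̂_j^S ≥ ν for all j ∈ S. Then for every initial state i ∈ N and every feasible pair (x⁰, x¹) for i, the value Σ_j R_j x¹_j + (1−β) Σ_j Q_j x⁰_j − ν Σ_j x¹_j is at most Q_i + f̂_i^S − ν g_i^S; moreover this bound is attained by the feasible pair defined by x¹_j = (e_i · H^S)_j for j ∈ S and x¹_j = 0 for j ∉ S, x⁰_j = (e_i · H^S)_j for j ∉ S and x⁰_j = 0 for j ∈ S. (This is the paper's Theorem 1: the optimal-stopping problem with terminal rewards is solved by the Gittins-index policy for the modified rewards.) -/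
open Matrix BigOperators
open scoped Classical

noncomputable section

/-- Transition matrix of the `S`-active policy: row `i` of `P` if `i ∈ S`,
the `i`-th standard unit row otherwise. -/
def PAct {N : Type*} [DecidableEq N] (P : Matrix N N ℝ) (S : Finset N) : Matrix N N ℝ :=
  fun i j => if i ∈ S then P i j else if i = j then 1 else 0

/-- Transition matrix of the `Sᶜ`-active policy. -/
def PPas {N : Type*} [DecidableEq N] (P : Matrix N N ℝ) (S : Finset N) : Matrix N N ℝ :=
  fun i j => if i ∈ S then (if i = j then 1 else 0) else P i j

/-- Basis matrix `B^S = I - β P^S`. -/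
def BMat {N : Type*} [Fintype N] [DecidableEq N] (β : ℝ) (P : Matrix N N ℝ) (S : Finset N) :
    Matrix N N ℝ := 1 - β • PAct P S

/-- Non-basic matrix `N^S = I - β P^{Sᶜ}`. -/
def NMat {N : Type*} [Fintype N] [DecidableEq N] (β : ℝ) (P : Matrix N N ℝ) (S : Finset N) :
    Matrix N N ℝ := 1 - β • PPas P S

/-- Basis inverse `H^S = (B^S)⁻¹`. -/
def HMat {N : Type*} [Fintype N] [DecidableEq N] (β : ℝ) (P : Matrix N N ℝ) (S : Finset N) :
    Matrix N N ℝ := (BMat β P S)⁻¹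

/-- Tableau matrix `A^S = N^S · H^S`. -/
def AMat {N : Type*} [Fintype N] [DecidableEq N] (β : ℝ) (P : Matrix N N ℝ) (S : Finset N) :
    Matrix N N ℝ := NMat β P S * HMat β P S

/-- Work measure `g^S = H^S · 1_S`. -/
def gWork {N : Type*} [Fintype N] [DecidableEq N] (β : ℝ) (P : Matrix N N ℝ) (S : Finset N) :
    N → ℝ := (HMat β P S).mulVec (fun j => if j ∈ S then 1 else 0)

/-- Reward measure `f^S = H^S · (R·1_S)`. -/
def fRew {N : Type*} [Fintype N] [DecidableEq N] (β : ℝ) (P : Matrix N N ℝ) (R : N → ℝ)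
    (S : Finset N) : N → ℝ := (HMat β P S).mulVec (fun j => if j ∈ S then R j else 0)

/-- Marginal work `w_i^S`. -/
def wMarg {N : Type*} [Fintype N] [DecidableEq N] (β : ℝ) (P : Matrix N N ℝ) (S : Finset N)
    (i : N) : ℝ :=
  if i ∈ S then (1 - β) * gWork β P S i
  else 1 + β * ∑ j ∈ S, P i j * gWork β P S j

/-- Marginal reward `r_i^S`. -/
def rMarg {N : Type*} [Fintype N] [DecidableEq N] (β : ℝ) (P : Matrix N N ℝ) (R : N → ℝ)
    (S : Finset N) (i : N) : ℝ :=
  if i ∈ S then (1 - β) * fRew β P R S i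
  else R i + β * ∑ j ∈ S, P i j * fRew β P R S j

/-- Marginal productivity rate `ν_i^S = r_i^S / w_i^S`. -/
def nuMarg {N : Type*} [Fintype N] [DecidableEq N] (β : ℝ) (P : Matrix N N ℝ) (R : N → ℝ)
    (S : Finset N) (i : N) : ℝ := rMarg β P R S i / wMarg β P S i

/-- Feasibility of a pair of row vectors `(x⁰, x¹)` for initial state `i`:
`x⁰, x¹ ≥ 0` and `(1-β) x⁰ + x¹ (I - β P) = e_i`. -/
def Feasible {N : Type*} [Fintype N] [DecidableEq N] (β : ℝ) (P : Matrix N N ℝ) (i : N)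
    (x0 x1 : N → ℝ) : Prop :=
  (∀ j, 0 ≤ x0 j) ∧ (∀ j, 0 ≤ x1 j) ∧
    (1 - β) • x0 + Matrix.vecMul x1 (1 - β • P) = Pi.single i 1

/-- Modified reward vector `R̂ = R - (I - βP)·Q`. -/
def Rhat {N : Type*} [Fintype N] [DecidableEq N] (β : ℝ) (P : Matrix N N ℝ) (R Q : N → ℝ) :
    N → ℝ := fun i => R i - ((1 - β • P).mulVec Q) i

/-!
Pairing the flow constraint `(1 - β) x⁰ + x¹ (I - β P) = e_i` with a vector `u` gives
`(1 - β) x⁰ u + x¹ (I - β P) u = u_i`. Taking `u = Q` absorbs the terminal rewards: the objective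
equals `Q_i + c x¹` for the net reward `c = R̂ - ν`. Taking `u` to be the reward measure of `S` for
`c`, linear programming duality bounds `c x¹` by `u_i` as soon as `u ≥ 0` and
`c ≤ (I - β P) u`. Reward measures and marginal rewards are linear in the reward, so the marginal
rewards for `c` are `r̂ - ν w`; since `w > 0`, the index conditions say that they are nonnegative
on `S` and nonpositive off `S`, which is exactly dual feasibility of `u`. Splitting row `i` of `H^S`
along `S` solves the flow constraint, and its `x¹` part pairs with `c` to `u_i`.
-/

section NonnegInverse

variable {n 𝕜 : Type*} [Fintype n] [DecidableEq n] [Field 𝕜] [LinearOrder 𝕜]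
  [IsStrictOrderedRing 𝕜] {A : Matrix n n 𝕜}

theorem nonneg_of_one_sub_mulVec_nonneg (hA0 : ∀ i j, 0 ≤ A i j) (hA1 : ∀ i, ∑ j, A i j < 1)
    {u : n → 𝕜} (hu : 0 ≤ (1 - A) *ᵥ u) : 0 ≤ u := by
  intro j
  have : Nonempty n := ⟨j⟩
  obtain ⟨m, hm⟩ := Finite.exists_min u
  refine le_trans ?_ (hm j)
  have hAm : (∑ k, A m k) * u m ≤ (A *ᵥ u) m := by
    rw [Finset.sum_mul]
    exact Finset.sum_le_sum fun k _ => mul_le_mul_of_nonneg_left (hm k) (hA0 m k)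
  rw [sub_mulVec, one_mulVec] at hu
  have hum : 0 ≤ u m - (A *ᵥ u) m := hu m
  refine nonneg_of_mul_nonneg_right ?_ (sub_pos.2 (hA1 m))
  linarith

theorem isUnit_one_sub_of_sum_row_lt_one (hA0 : ∀ i j, 0 ≤ A i j) (hA1 : ∀ i, ∑ j, A i j < 1) :
    IsUnit (1 - A) := by
  rw [← mulVec_injective_iff_isUnit]
  have le_of_eq_image {a b : n → 𝕜} (hab : (1 - A) *ᵥ a = (1 - A) *ᵥ b) : b ≤ a :=
    sub_nonneg.1 <| nonneg_of_one_sub_mulVec_nonneg hA0 hA1 <| by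
      rw [mulVec_sub, hab, sub_self]
  exact fun a b hab => le_antisymm (le_of_eq_image hab.symm) (le_of_eq_image hab)

theorem inv_one_sub_apply_nonneg (hA0 : ∀ i j, 0 ≤ A i j) (hA1 : ∀ i, ∑ j, A i j < 1) (i j : n) :
    0 ≤ (1 - A)⁻¹ i j := by
  have hdet := (isUnit_iff_isUnit_det _).1 (isUnit_one_sub_of_sum_row_lt_one hA0 hA1)
  have hcol : 0 ≤ (1 - A)⁻¹ *ᵥ Pi.single j 1 :=
    nonneg_of_one_sub_mulVec_nonneg hA0 hA1 <| by
      rw [mulVec_mulVec, mul_nonsing_inv _ hdet, one_mulVec]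
      exact Pi.single_nonneg.2 zero_le_one
  rw [mulVec_single_one] at hcol
  exact hcol i

end NonnegInverse

section ActivePolicy

variable {N : Type*} [DecidableEq N] {β : ℝ} {P : Matrix N N ℝ} {S : Finset N} {R : N → ℝ}
  {i j : N}

theorem smul_PAct_nonneg (hP0 : ∀ i ∈ S, ∀ j, 0 ≤ P i j) (hβ0 : 0 ≤ β) (i j : N) :
    0 ≤ (β • PAct P S) i j := by
  refine mul_nonneg hβ0 ?_
  unfold PAct
  split_ifs with hi
  exacts [hP0 i hi j, zero_le_one, le_rfl]

variable [Fintype N]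

theorem sum_smul_PAct_lt_one (hP1 : ∀ i ∈ S, β * ∑ j, P i j < 1) (hβ1 : β < 1) (i : N) :
    ∑ j, (β • PAct P S) i j < 1 := by
  simp only [Matrix.smul_apply, smul_eq_mul, ← Finset.mul_sum]
  by_cases hi : i ∈ S
  · simpa only [PAct, if_pos hi] using hP1 i hi
  · simpa [PAct, hi] using hβ1

theorem isUnit_det_BMat (hP0 : ∀ i ∈ S, ∀ j, 0 ≤ P i j) (hP1 : ∀ i ∈ S, β * ∑ j, P i j < 1)
    (hβ0 : 0 ≤ β) (hβ1 : β < 1) : IsUnit (BMat β P S).det :=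
  (isUnit_iff_isUnit_det _).1 <|
    isUnit_one_sub_of_sum_row_lt_one (smul_PAct_nonneg hP0 hβ0) (sum_smul_PAct_lt_one hP1 hβ1)

theorem HMat_nonneg (hP0 : ∀ i ∈ S, ∀ j, 0 ≤ P i j) (hP1 : ∀ i ∈ S, β * ∑ j, P i j < 1)
    (hβ0 : 0 ≤ β) (hβ1 : β < 1) (i j : N) : 0 ≤ HMat β P S i j :=
  inv_one_sub_apply_nonneg (smul_PAct_nonneg hP0 hβ0) (sum_smul_PAct_lt_one hP1 hβ1) i j

theorem BMat_eq_diagonal_mul_add : BMat β P S =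
    diagonal (fun j => if j ∈ S then 1 else 0) * (1 - β • P) +
      diagonal (fun j => if j ∈ S then 0 else 1 - β) := by
  ext i j
  by_cases hi : i ∈ S <;> rcases eq_or_ne i j with rfl | hij <;>
    simp [BMat, PAct, *]

theorem BMat_mulVec_apply_of_mem (hj : j ∈ S) (u : N → ℝ) :
    (BMat β P S *ᵥ u) j = ((1 - β • P) *ᵥ u) j := by
  rw [BMat_eq_diagonal_mul_add, add_mulVec, ← mulVec_mulVec, Pi.add_apply, mulVec_diagonal,
    mulVec_diagonal]
  simp only [hj, if_true, one_mul, zero_mul, add_zero]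

theorem BMat_mulVec_apply_of_notMem (hj : j ∉ S) (u : N → ℝ) :
    (BMat β P S *ᵥ u) j = (1 - β) * u j := by
  rw [BMat_eq_diagonal_mul_add, add_mulVec, ← mulVec_mulVec, Pi.add_apply, mulVec_diagonal,
    mulVec_diagonal]
  simp only [hj, if_false, zero_mul, zero_add]

theorem vecMul_BMat (x : N → ℝ) : x ᵥ* BMat β P S =
    (1 - β) • (fun j => if j ∈ S then 0 else x j) +
      (fun j => if j ∈ S then x j else 0) ᵥ* (1 - β • P) := by
  rw [BMat_eq_diagonal_mul_add, vecMul_add, ← vecMul_vecMul, add_comm]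
  congr 2 <;> ext j <;> simp [vecMul_diagonal, mul_comm]

theorem one_sub_smul_mulVec_apply (u : N → ℝ) (j : N) :
    ((1 - β • P) *ᵥ u) j = u j - β * ∑ k, P j k * u k := by
  rw [sub_mulVec, one_mulVec, smul_mulVec]
  rfl

theorem BMat_mulVec_fRew (hB : IsUnit (BMat β P S).det) :
    BMat β P S *ᵥ fRew β P R S = fun j => if j ∈ S then R j else 0 := by
  rw [fRew, HMat, mulVec_mulVec, mul_nonsing_inv _ hB, one_mulVec]

theorem one_sub_smul_mulVec_fRew_of_mem (hB : IsUnit (BMat β P S).det) (hj : j ∈ S) :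
    ((1 - β • P) *ᵥ fRew β P R S) j = R j := by
  rw [← BMat_mulVec_apply_of_mem hj, BMat_mulVec_fRew hB]
  exact if_pos hj

theorem fRew_of_notMem (hB : IsUnit (BMat β P S).det) (hβ : β ≠ 1) (hj : j ∉ S) :
    fRew β P R S j = 0 := by
  have h : (1 - β) * fRew β P R S j = 0 := by
    rw [← BMat_mulVec_apply_of_notMem hj, BMat_mulVec_fRew hB]
    exact if_neg hj
  exact (mul_eq_zero.1 h).resolve_left (sub_ne_zero.2 hβ.symm)

theorem rMarg_of_notMem (hB : IsUnit (BMat β P S).det) (hβ : β ≠ 1) (hj : j ∉ S) :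
    rMarg β P R S j = R j - ((1 - β • P) *ᵥ fRew β P R S) j := by
  have hsum : ∑ k ∈ S, P j k * fRew β P R S k = ∑ k, P j k * fRew β P R S k :=
    Finset.sum_subset (Finset.subset_univ S) fun k _ hk => by
      rw [fRew_of_notMem hB hβ hk, mul_zero]
  rw [rMarg, if_neg hj, hsum, one_sub_smul_mulVec_apply, fRew_of_notMem hB hβ hj]
  ring

theorem fRew_sub_const (ν : ℝ) (i : N) :
    fRew β P (fun j => R j - ν) S i = fRew β P R S i - ν * gWork β P S i := by
  simp only [fRew, gWork, mulVec, dotProduct, Finset.mul_sum, ← Finset.sum_sub_distrib]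
  refine Finset.sum_congr rfl fun j _ => ?_
  split_ifs <;> ring

theorem rMarg_sub_const (ν : ℝ) (i : N) :
    rMarg β P (fun j => R j - ν) S i = rMarg β P R S i - ν * wMarg β P S i := by
  by_cases hi : i ∈ S
  · simp only [rMarg, wMarg, if_pos hi, fRew_sub_const]
    ring
  · simp only [rMarg, wMarg, if_neg hi, fRew_sub_const, mul_sub, Finset.sum_sub_distrib,
      mul_left_comm _ ν, ← Finset.mul_sum]
    ring

theorem gWork_nonneg (hH : ∀ i j, 0 ≤ HMat β P S i j) (i : N) : 0 ≤ gWork β P S i :=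
  Finset.sum_nonneg fun j _ => mul_nonneg (hH i j) (ite_nonneg zero_le_one le_rfl)

theorem gWork_of_mem (hB : IsUnit (BMat β P S).det) (hj : j ∈ S) :
    gWork β P S j = 1 + β * ∑ k, P j k * gWork β P S k := by
  have h : ((1 - β • P) *ᵥ gWork β P S) j = 1 :=
    one_sub_smul_mulVec_fRew_of_mem (R := fun _ => 1) hB hj
  rw [one_sub_smul_mulVec_apply] at h
  linarith

theorem wMarg_pos (hP0 : ∀ i j, 0 ≤ P i j) (hβ0 : 0 ≤ β) (hβ1 : β < 1)
    (hB : IsUnit (BMat β P S).det) (hH : ∀ i j, 0 ≤ HMat β P S i j) (i : N) :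
    0 < wMarg β P S i := by
  have hwork (T : Finset N) : 0 < 1 + β * ∑ j ∈ T, P i j * gWork β P S j :=
    add_pos_of_pos_of_nonneg one_pos <| mul_nonneg hβ0 <|
      Finset.sum_nonneg fun j _ => mul_nonneg (hP0 i j) (gWork_nonneg hH j)
  unfold wMarg
  split_ifs with hi
  · exact mul_pos (sub_pos.2 hβ1) (gWork_of_mem hB hi ▸ hwork Finset.univ)
  · exact hwork S

theorem nuMarg_le_iff {ν : ℝ} (hw : 0 < wMarg β P S i) :
    nuMarg β P R S i ≤ ν ↔ rMarg β P (fun j => R j - ν) S i ≤ 0 := by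
  rw [nuMarg, div_le_iff₀ hw, rMarg_sub_const, sub_nonpos]

theorem le_nuMarg_iff {ν : ℝ} (hw : 0 < wMarg β P S i) :
    ν ≤ nuMarg β P R S i ↔ 0 ≤ rMarg β P (fun j => R j - ν) S i := by
  rw [nuMarg, le_div_iff₀ hw, rMarg_sub_const, sub_nonneg]

theorem fRew_nonneg_of_rMarg_nonneg (hB : IsUnit (BMat β P S).det) (hβ1 : β < 1)
    (hr : ∀ j ∈ S, 0 ≤ rMarg β P R S j) : 0 ≤ fRew β P R S := by
  intro j
  by_cases hj : j ∈ S
  · have h := hr j hj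
    rw [rMarg, if_pos hj] at h
    exact nonneg_of_mul_nonneg_right h (sub_pos.2 hβ1)
  · exact (fRew_of_notMem hB hβ1.ne hj).ge

theorem le_one_sub_smul_mulVec_fRew (hB : IsUnit (BMat β P S).det) (hβ : β ≠ 1)
    (hr : ∀ j ∉ S, rMarg β P R S j ≤ 0) : R ≤ (1 - β • P) *ᵥ fRew β P R S := by
  intro j
  by_cases hj : j ∈ S
  · exact (one_sub_smul_mulVec_fRew_of_mem hB hj).ge
  · exact sub_nonpos.1 (rMarg_of_notMem hB hβ hj ▸ hr j hj)

end ActivePolicy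

section Duality

variable {N : Type*} [Fintype N] [DecidableEq N] {β : ℝ} {P : Matrix N N ℝ} {S : Finset N}
  {i : N} {x0 x1 : N → ℝ}

theorem Feasible.dotProduct_add_dotProduct_eq (h : Feasible β P i x0 x1) (u : N → ℝ) :
    (1 - β) * (u ⬝ᵥ x0) + ((1 - β • P) *ᵥ u) ⬝ᵥ x1 = u i := by
  have hu := congrArg (· ⬝ᵥ u) h.2.2
  simpa only [add_dotProduct, smul_dotProduct, ← dotProduct_mulVec, single_one_dotProduct,
    smul_eq_mul, dotProduct_comm x0, dotProduct_comm x1] using hu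

theorem Feasible.objective_eq_add_dotProduct (h : Feasible β P i x0 x1) (R Q : N → ℝ) (ν : ℝ) :
    ∑ j, R j * x1 j + (1 - β) * ∑ j, Q j * x0 j - ν * ∑ j, x1 j =
      Q i + (fun j => Rhat β P R Q j - ν) ⬝ᵥ x1 := by
  have hsplit : (fun j => Rhat β P R Q j - ν) ⬝ᵥ x1 =
      R ⬝ᵥ x1 - ((1 - β • P) *ᵥ Q) ⬝ᵥ x1 - ν * ∑ j, x1 j := by
    simp only [dotProduct, Rhat, sub_mul, Finset.sum_sub_distrib, Finset.mul_sum]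
  rw [hsplit, ← h.dotProduct_add_dotProduct_eq Q]
  simp only [dotProduct]
  ring

theorem Feasible.dotProduct_le (h : Feasible β P i x0 x1) (hβ1 : β ≤ 1) {c u : N → ℝ}
    (hu : 0 ≤ u) (hc : c ≤ (1 - β • P) *ᵥ u) : c ⬝ᵥ x1 ≤ u i :=
  calc c ⬝ᵥ x1 ≤ ((1 - β • P) *ᵥ u) ⬝ᵥ x1 := dotProduct_le_dotProduct_of_nonneg_right hc h.2.1
    _ ≤ (1 - β) * (u ⬝ᵥ x0) + ((1 - β • P) *ᵥ u) ⬝ᵥ x1 :=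
      le_add_of_nonneg_left <|
        mul_nonneg (sub_nonneg.2 hβ1) (dotProduct_nonneg_of_nonneg hu h.1)
    _ = u i := h.dotProduct_add_dotProduct_eq u

theorem feasible_HMat_row (hB : IsUnit (BMat β P S).det) (hH : ∀ i j, 0 ≤ HMat β P S i j)
    (i : N) : Feasible β P i (fun j => if j ∈ S then 0 else HMat β P S i j)
      (fun j => if j ∈ S then HMat β P S i j else 0) := by
  refine ⟨fun j => ?_, fun j => ?_, ?_⟩
  · exact ite_nonneg le_rfl (hH i j)
  · exact ite_nonneg (hH i j) le_rfl
  · have hrow : HMat β P S i = Pi.single i 1 ᵥ* HMat β P S := (single_one_vecMul i _).symm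
    rw [← vecMul_BMat, hrow, vecMul_vecMul, HMat, nonsing_inv_mul _ hB, vecMul_one]

theorem dotProduct_HMat_row (c : N → ℝ) (i : N) :
    c ⬝ᵥ (fun j => if j ∈ S then HMat β P S i j else 0) = fRew β P c S i :=
  Finset.sum_congr rfl fun j _ => by by_cases hj : j ∈ S <;> simp [hj, mul_comm]

end Duality

theorem stmt0_general {N : Type*} [Fintype N] [DecidableEq N]
    (P : Matrix N N ℝ) (hP0 : ∀ i j, 0 ≤ P i j) (β : ℝ) (hβ0 : 0 ≤ β) (hβ1 : β < 1)
    (R Q : N → ℝ) (ν : ℝ) (S : Finset N) (hP1 : ∀ i ∈ S, β * ∑ j, P i j < 1)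
    (hout : ∀ j ∉ S, nuMarg β P (Rhat β P R Q) S j ≤ ν)
    (hin : ∀ j ∈ S, ν ≤ nuMarg β P (Rhat β P R Q) S j) (i : N) :
    (∀ x0 x1 : N → ℝ, Feasible β P i x0 x1 →
      ∑ j, R j * x1 j + (1 - β) * ∑ j, Q j * x0 j - ν * ∑ j, x1 j
        ≤ Q i + fRew β P (Rhat β P R Q) S i - ν * gWork β P S i) ∧
    Feasible β P i (fun j => if j ∈ S then 0 else HMat β P S i j)
        (fun j => if j ∈ S then HMat β P S i j else 0) ∧
    (∑ j, R j * (if j ∈ S then HMat β P S i j else 0)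
      + (1 - β) * ∑ j, Q j * (if j ∈ S then 0 else HMat β P S i j)
      - ν * ∑ j, (if j ∈ S then HMat β P S i j else 0)
      = Q i + fRew β P (Rhat β P R Q) S i - ν * gWork β P S i) := by
  have hB := isUnit_det_BMat (fun i _ => hP0 i) hP1 hβ0 hβ1
  have hH := HMat_nonneg (fun i _ => hP0 i) hP1 hβ0 hβ1
  have hw := wMarg_pos hP0 hβ0 hβ1 hB hH
  have hfeas := feasible_HMat_row hB hH i
  rw [add_sub_assoc, ← fRew_sub_const]
  refine ⟨fun x0 x1 hx => ?_, hfeas, ?_⟩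
  · rw [hx.objective_eq_add_dotProduct]
    gcongr
    exact hx.dotProduct_le hβ1.le
      (fRew_nonneg_of_rMarg_nonneg hB hβ1 fun j hj => (le_nuMarg_iff (hw j)).1 (hin j hj))
      (le_one_sub_smul_mulVec_fRew hB hβ1.ne fun j hj => (nuMarg_le_iff (hw j)).1 (hout j hj))
  · rw [hfeas.objective_eq_add_dotProduct, dotProduct_HMat_row]

/-- Theorem 1 of the paper: the optimal-stopping LP with terminal
rewards is solved by the Gittins-index (S-active) solution for the modified rewards. -/
theorem stmt0 {N : Type*} [Fintype N] [DecidableEq N] [Nonempty N]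
    (P : Matrix N N ℝ) (hP0 : ∀ i j, 0 ≤ P i j) (hP1 : ∀ i, ∑ j, P i j = 1)
    (β : ℝ) (hβ0 : 0 < β) (hβ1 : β < 1)
    (R Q : N → ℝ) (ν : ℝ) (S : Finset N)
    (hout : ∀ j ∉ S, nuMarg β P (Rhat β P R Q) S j ≤ ν)
    (hin : ∀ j ∈ S, ν ≤ nuMarg β P (Rhat β P R Q) S j) (i : N) :
    (∀ x0 x1 : N → ℝ, Feasible β P i x0 x1 →
      ∑ j, R j * x1 j + (1 - β) * ∑ j, Q j * x0 j - ν * ∑ j, x1 j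
        ≤ Q i + fRew β P (Rhat β P R Q) S i - ν * gWork β P S i) ∧
    Feasible β P i (fun j => if j ∈ S then 0 else HMat β P S i j)
        (fun j => if j ∈ S then HMat β P S i j else 0) ∧
    (∑ j, R j * (if j ∈ S then HMat β P S i j else 0)
      + (1 - β) * ∑ j, Q j * (if j ∈ S then 0 else HMat β P S i j)
      - ν * ∑ j, (if j ∈ S then HMat β P S i j else 0)
      = Q i + fRew β P (Rhat β P R Q) S i - ν * gWork β P S i) :=
  stmt0_general P hP0 β hβ0.le hβ1 R Q ν S (fun i _ => by rwa [hP1, mul_one]) hout hin i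
end
end

section
/- For every initial state i ∈ N and every feasible pair (x⁰, x¹) for i, Σ_j R_j x¹_j + (1−β) Σ_j Q_j x⁰_j = Q_i + Σ_j (R − (I − βP)·Q)_j x¹_j. (This is the paper's Lemma 1 in the discounted case: terminal rewards can be eliminated by replacing R with R − (I − βP)Q.) -/
open Matrix BigOperators
open scoped Classical

noncomputable section

section TerminalRewards

variable {m n S α : Type*} [Fintype m] [Fintype n]

theorem smul_add_vecMul_dotProduct [NonUnitalSemiring α] [DistribSMul S α] [IsScalarTower S α α]
    (c : S) (v : n → α) (u : m → α) (A : Matrix m n α) (w : n → α) :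
    (c • v + u ᵥ* A) ⬝ᵥ w = c • (v ⬝ᵥ w) + u ⬝ᵥ (A *ᵥ w) := by
  rw [add_dotProduct, smul_dotProduct, dotProduct_mulVec]

-- Pairing the balance constraint `h` with `Q` trades the terminal rewards for a correction to `R`.
theorem stmt1_general [NonUnitalCommRing α] {A : Matrix m n α} {c : α} {x0 y : n → α}
    {x1 : m → α} (h : c • x0 + x1 ᵥ* A = y) (R : m → α) (Q : n → α) :
    R ⬝ᵥ x1 + c * (Q ⬝ᵥ x0) = Q ⬝ᵥ y + (R - A *ᵥ Q) ⬝ᵥ x1 := by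
  have balance : Q ⬝ᵥ y = c * (Q ⬝ᵥ x0) + (A *ᵥ Q) ⬝ᵥ x1 := by
    rw [← h, dotProduct_comm, smul_add_vecMul_dotProduct, smul_eq_mul, dotProduct_comm x0,
      dotProduct_comm x1]
  rw [balance, sub_dotProduct]
  abel

end TerminalRewards

/-- Lemma 1, discounted case: terminal rewards can be eliminated by
replacing `R` with `R - (I - βP)Q`. -/
theorem stmt1 {N : Type*} [Fintype N] [DecidableEq N] [Nonempty N]
    (P : Matrix N N ℝ) (hP0 : ∀ i j, 0 ≤ P i j) (hP1 : ∀ i, ∑ j, P i j = 1)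
    (β : ℝ) (hβ0 : 0 < β) (hβ1 : β < 1)
    (R Q : N → ℝ) (i : N) (x0 x1 : N → ℝ) (hx : Feasible β P i x0 x1) :
    ∑ j, R j * x1 j + (1 - β) * ∑ j, Q j * x0 j
      = Q i + ∑ j, Rhat β P R Q j * x1 j := by
  rw [← dotProduct_single_one Q i]
  exact stmt1_general hx.2.2 R Q
end
end

section
/- Fix S ⊆ N and j ∉ S, let T := S ∪ {j} and a := A^S_{jj}. Then a ≠ 0, and the matrix A^T is obtained from A^S by a simplex pivot on the (j,j) entry: A^T_{ik} = A^S_{ik} − A^S_{ij} A^S_{jk} / a for all i ≠ j and k ≠ j; A^T_{ij} = A^S_{ij} / a for all i ≠ j; A^T_{jk} = −A^S_{jk} / a for all k ≠ j; and A^T_{jj} = 1/a. (The pivoted parametric simplex tableau for S equals the tableau for S ∪ {j}, Table 3 of the paper.) -/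
open Matrix BigOperators
open scoped Classical

noncomputable section

/-!
Adding `j` to `S` swaps the `j`-th rows of `B = B^S` and `M = N^S`. Since `M = A B` for `A = A^S`,
the new basis matrix is `B' = F B`, where `F` is the identity with its `j`-th row replaced by that
of `A`, and the new non-basic matrix is `M' = G B`, where `G` is `A` with its `j`-th row replaced
by the `j`-th unit row. Taking determinants, `det B' = A j j * det B`, so the pivot entry vanishes
only if `B'` is singular. The pivoted tableau is the solution `X` of `X F = G`, and hence of
`X B' = M'`. For stochastic `P` and `|β| < 1` every `B^S` is strictly diagonally dominant, hence
invertible.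
-/

section RowUpdate

variable {n R : Type*} [DecidableEq n]

theorem updateRow_one_eq_add_vecMulVec [Ring R] (j : n) (v : n → R) :
    (1 : Matrix n n R).updateRow j v = 1 + vecMulVec (Pi.single j 1) (v - Pi.single j 1) := by
  ext i k
  by_cases hi : i = j
  · subst hi
    simp [vecMulVec_apply, one_eq_pi_single]
  · simp [vecMulVec_apply, hi]

variable [Fintype n]

theorem mul_updateRow_one [Ring R] (A : Matrix n n R) (j : n) (v : n → R) :
    A * (1 : Matrix n n R).updateRow j v = A + vecMulVec (A.col j) (v - Pi.single j 1) := by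
  rw [updateRow_one_eq_add_vecMulVec, Matrix.mul_add, Matrix.mul_one, mul_vecMulVec,
    mulVec_single_one]

theorem det_updateRow_mul_row [CommRing R] (A B : Matrix n n R) (j : n) :
    (B.updateRow j ((A * B) j)).det = A j j * B.det := by
  have hrow : (A * B) j = ∑ k, A j k • B k := by
    rw [mul_apply_eq_vecMul, vecMul_eq_sum]
  rw [hrow, det_updateRow_sum, smul_eq_mul]

theorem isUnit_apply_self_of_isUnit_updateRow_mul [CommRing R] {A B : Matrix n n R} {j : n}
    (h : IsUnit (B.updateRow j ((A * B) j))) : IsUnit (A j j) := by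
  rw [isUnit_iff_isUnit_det, det_updateRow_mul_row] at h
  exact isUnit_of_mul_isUnit_left h

end RowUpdate

section Pivot

variable {n K : Type*} [DecidableEq n] [Field K]

/-- The simplex pivot of a square tableau `A` on its `(j, j)` entry. The signs are those of the
exchange `x j ↔ y j` in the system `y = A *ᵥ x`: solving it for the `y i` with `i ≠ j` and `x j`,
in terms of the `x k` with `k ≠ j` and `y j`, gives the coefficient matrix `pivot A j`. It has this
meaning only when `A j j ≠ 0`. -/
def pivot (A : Matrix n n K) (j : n) : Matrix n n K :=
  of fun i k =>
    if i = j then if k = j then 1 / A j j else -A j k / A j j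
    else if k = j then A i j / A j j else A i k - A i j * A j k / A j j

variable [Fintype n] {A : Matrix n n K} {j : n}

theorem pivot_mul_updateRow_one (hA : A j j ≠ 0) :
    pivot A j * (1 : Matrix n n K).updateRow j (A j) = A.updateRow j (Pi.single j 1) := by
  rw [mul_updateRow_one]
  ext i k
  rw [Matrix.add_apply, vecMulVec_apply]
  by_cases hi : i = j <;> by_cases hk : k = j
  · simp [pivot, hi, hk, hA, mul_sub]
  · simp [pivot, hi, hk, div_eq_inv_mul]
  · simp [pivot, hi, hk, hA, mul_sub]
  · simp [pivot, hi, hk, div_mul_eq_mul_div]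

theorem pivot_mul_updateRow (hA : A j j ≠ 0) (B : Matrix n n K) :
    pivot A j * B.updateRow j ((A * B) j) = (A * B).updateRow j (B j) :=
  calc pivot A j * B.updateRow j ((A * B) j)
      = pivot A j * ((1 : Matrix n n K).updateRow j (A j) * B) := by
        rw [updateRow_mul, Matrix.one_mul, mul_apply_eq_vecMul]
    _ = A.updateRow j (Pi.single j 1) * B := by
        rw [← Matrix.mul_assoc, pivot_mul_updateRow_one hA]
    _ = (A * B).updateRow j (B j) := by
        rw [updateRow_mul, single_one_vecMul, row]

theorem updateRow_mul_inv_updateRow_eq_pivot {B : Matrix n n K}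
    (h : IsUnit (B.updateRow j ((A * B) j))) :
    (A * B).updateRow j (B j) * (B.updateRow j ((A * B) j))⁻¹ = pivot A j := by
  rw [← pivot_mul_updateRow (isUnit_apply_self_of_isUnit_updateRow_mul h).ne_zero,
    mul_nonsing_inv_cancel_right _ _ ((isUnit_iff_isUnit_det _).1 h)]

end Pivot

section Invertibility

variable {N : Type*} [Fintype N] [DecidableEq N]

theorem isUnit_one_sub_of_sum_norm_row_lt_one {K : Type*} [NormedField K] {A : Matrix N N K}
    (hA : ∀ i, ∑ k, ‖A i k‖ < 1) : IsUnit (1 - A) := by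
  refine (isUnit_iff_isUnit_det _).2 (det_ne_zero_of_sum_row_lt_diag fun i => ?_).isUnit
  calc ∑ k ∈ Finset.univ.erase i, ‖(1 - A) i k‖ = ∑ k ∈ Finset.univ.erase i, ‖A i k‖ :=
        Finset.sum_congr rfl fun k hk => by simp [(Finset.ne_of_mem_erase hk).symm]
    _ < 1 - ‖A i i‖ := by
        rw [lt_sub_iff_add_lt, Finset.sum_erase_add _ _ (Finset.mem_univ i)]
        exact hA i
    _ ≤ ‖(1 - A) i i‖ := by
        simpa using norm_sub_norm_le 1 (A i i)

theorem PAct_mem_rowStochastic {P : Matrix N N ℝ} (hP : P ∈ rowStochastic ℝ N) (S : Finset N) :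
    PAct P S ∈ rowStochastic ℝ N := by
  rw [mem_rowStochastic_iff_sum] at hP ⊢
  constructor
  · intro i k
    unfold PAct
    split_ifs
    exacts [hP.1 i k, zero_le_one, le_rfl]
  · intro i
    by_cases hi : i ∈ S <;> simp [PAct, hi, hP.2]

theorem isUnit_BMat {P : Matrix N N ℝ} (hP : P ∈ rowStochastic ℝ N) {β : ℝ} (hβ : |β| < 1)
    (S : Finset N) : IsUnit (BMat β P S) := by
  have hQ := PAct_mem_rowStochastic hP S
  refine isUnit_one_sub_of_sum_norm_row_lt_one fun i => ?_
  calc ∑ k, ‖(β • PAct P S) i k‖ = |β| * ∑ k, PAct P S i k := by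
        simp [Finset.mul_sum, abs_of_nonneg (nonneg_of_mem_rowStochastic hQ)]
    _ < 1 := by rwa [sum_row_of_mem_rowStochastic hQ, mul_one]

end Invertibility

section Tableau

variable {N : Type*} [Fintype N] [DecidableEq N] (β : ℝ) (P : Matrix N N ℝ) {S : Finset N} {j : N}

theorem BMat_insert (hj : j ∉ S) :
    BMat β P (insert j S) = (BMat β P S).updateRow j (NMat β P S j) := by
  ext i k
  by_cases hi : i = j
  · subst hi
    simp [BMat, NMat, PAct, PPas, hj]
  · simp [BMat, PAct, hi]

theorem NMat_insert (hj : j ∉ S) :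
    NMat β P (insert j S) = (NMat β P S).updateRow j (BMat β P S j) := by
  ext i k
  by_cases hi : i = j
  · subst hi
    simp [BMat, NMat, PAct, PPas, hj]
  · simp [NMat, PPas, hi]

variable {β P}

theorem AMat_mul_BMat (hB : IsUnit (BMat β P S)) : AMat β P S * BMat β P S = NMat β P S :=
  nonsing_inv_mul_cancel_right _ _ ((isUnit_iff_isUnit_det _).1 hB)

theorem AMat_apply_self_ne_zero (hj : j ∉ S) (hB : IsUnit (BMat β P S))
    (hB' : IsUnit (BMat β P (insert j S))) : AMat β P S j j ≠ 0 := by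
  rw [BMat_insert β P hj, ← AMat_mul_BMat hB] at hB'
  exact (isUnit_apply_self_of_isUnit_updateRow_mul hB').ne_zero

theorem AMat_insert (hj : j ∉ S) (hB : IsUnit (BMat β P S))
    (hB' : IsUnit (BMat β P (insert j S))) :
    AMat β P (insert j S) = pivot (AMat β P S) j := by
  rw [BMat_insert β P hj, ← AMat_mul_BMat hB] at hB'
  rw [AMat, HMat, BMat_insert β P hj, NMat_insert β P hj, ← AMat_mul_BMat hB,
    updateRow_mul_inv_updateRow_eq_pivot hB']

end Tableau

theorem stmt11_general {N : Type*} [Fintype N] [DecidableEq N] (P : Matrix N N ℝ) (β : ℝ)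
    (S : Finset N) (j : N) (hj : j ∉ S)
    (hB : IsUnit (BMat β P S)) (hB' : IsUnit (BMat β P (insert j S))) :
    AMat β P S j j ≠ 0 ∧
    (∀ i k : N, i ≠ j → k ≠ j →
      AMat β P (insert j S) i k
        = AMat β P S i k - AMat β P S i j * AMat β P S j k / AMat β P S j j) ∧
    (∀ i : N, i ≠ j →
      AMat β P (insert j S) i j = AMat β P S i j / AMat β P S j j) ∧
    (∀ k : N, k ≠ j →
      AMat β P (insert j S) j k = - AMat β P S j k / AMat β P S j j) ∧
    AMat β P (insert j S) j j = 1 / AMat β P S j j := by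
  rw [AMat_insert hj hB hB']
  refine ⟨AMat_apply_self_ne_zero hj hB hB', fun i k hi hk => ?_, fun i hi => ?_,
    fun k hk => ?_, ?_⟩
  · simp [pivot, hi, hk]
  · simp [pivot, hi]
  · simp [pivot, hk]
  · simp [pivot]

/-- Table 3: the tableau for `S ∪ {j}` is obtained from that for `S`
by a simplex pivot on the `(j,j)` entry. -/
theorem stmt11 {N : Type*} [Fintype N] [DecidableEq N] [Nonempty N]
    (P : Matrix N N ℝ) (hP0 : ∀ i j, 0 ≤ P i j) (hP1 : ∀ i, ∑ j, P i j = 1)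
    (β : ℝ) (hβ0 : 0 < β) (hβ1 : β < 1)
    (S : Finset N) (j : N) (hj : j ∉ S) :
    AMat β P S j j ≠ 0 ∧
    (∀ i k : N, i ≠ j → k ≠ j →
      AMat β P (insert j S) i k
        = AMat β P S i k - AMat β P S i j * AMat β P S j k / AMat β P S j j) ∧
    (∀ i : N, i ≠ j →
      AMat β P (insert j S) i j = AMat β P S i j / AMat β P S j j) ∧
    (∀ k : N, k ≠ j →
      AMat β P (insert j S) j k = - AMat β P S j k / AMat β P S j j) ∧
    AMat β P (insert j S) j j = 1 / AMat β P S j j := by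
  have hB := isUnit_BMat (mem_rowStochastic_iff_sum.2 ⟨hP0, hP1⟩) (abs_lt.2 ⟨by linarith, hβ1⟩)
  exact stmt11_general P β S j hj (hB S) (hB (insert j S))
end
end
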